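/- Generic correctness of state splitting: let Fc : Set α → Set α be monotone, Fa, Sp : Set β → Set β arbitrary functions, and C : Set α → Set β → Prop a relation such that (i) C ∅ B holds for every B; (ii) for all T and B, C T B implies C (Fc T) (Fa (Sp B)); (iii) C is antitone in its second argument: if B ⊆ B' and C T B' then C T B; (iv) C is continuous in its first argument: for every monotone sequence T : ℕ → Set α and every B, if C (T i) B for all i then C (⋃ i, T i) B; (v) Sp preserves consistency: for all T and B, C T B implies C T (Sp B). Then for every A with A ⊆ Fa (Sp A), the relation C (⋃ n, Fc^[n] ∅) (Sp A) holds. -/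

import Mathlib

/-- Generic correctness of state splitting. -/
theorem generic_state_splitting_correct {α β : Type*}
    (Fc : Set α → Set α) (Fa Sp : Set β → Set β)
    (hFc : ∀ T T' : Set α, T ⊆ T' → Fc T ⊆ Fc T')
    (C : Set α → Set β → Prop)
    (hempty : ∀ B : Set β, C ∅ B)
    (hstep : ∀ (T : Set α) (B : Set β), C T B → C (Fc T) (Fa (Sp B)))
    (hanti : ∀ (T : Set α) (B B' : Set β), B ⊆ B' → C T B' → C T B)
    (hcont : ∀ (T : ℕ → Set α), (∀ i j, i ≤ j → T i ⊆ T j) →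
      ∀ B : Set β, (∀ i, C (T i) B) → C (⋃ i, T i) B)
    (hSp : ∀ (T : Set α) (B : Set β), C T B → C T (Sp B))
    (A : Set β) (hA : A ⊆ Fa (Sp A)) :
    C (⋃ n, Fc^[n] ∅) (Sp A) := by
  apply hSp
  apply hcont (fun n => Fc^[n] ∅)
  · have hs : ∀ n, Fc^[n] ∅ ⊆ Fc^[n + 1] ∅ := by
      intro n
      induction n with
      | zero => exact Set.empty_subset _
      | succ k ih =>
        rw [Function.iterate_succ_apply' Fc k, Function.iterate_succ_apply' Fc (k + 1)]
        exact hFc _ _ ih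
    intro i j hij
    exact monotone_nat_of_le_succ (f := fun n => Fc^[n] (∅ : Set α)) hs hij
  · intro n
    induction n with
    | zero => exact hempty A
    | succ k ih =>
      simp only [Function.iterate_succ_apply'] at ih ⊢
      exact hanti _ _ _ hA (hstep _ _ ih)
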